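/- arXiv:1506.06523 — 2 statements merged into one kernel-verified Lean document; each statement's English description precedes it below -/
import Mathlib

section
/- Let A be a unital complex C*-algebra and H a uniformly bounded subgroup of Aˣ (sup_{h∈H} ‖h‖ < ∞). Then the orbit diameter function D_H(a) = sup_{h∈H} d(a, h a h*) is geodesically convex: for all positive invertible a, b and all t ∈ [0,1], D_H(γ_{a,b}(t)) ≤ (1−t)·D_H(a) + t·D_H(b), where γ_{a,b}(t) = a^{1/2}(a^{-1/2} b a^{-1/2})^t a^{1/2} and d(x,y) = ‖log(x^{-1/2} y x^{-1/2})‖. -/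
/-- An element of a unital C*-algebra is *positive invertible* if it is self-adjoint
with spectrum contained in `(0, ∞)`. -/
def IsPosInv {A : Type*} [CStarAlgebra A] (a : A) : Prop :=
  IsSelfAdjoint a ∧ spectrum ℝ a ⊆ Set.Ioi (0 : ℝ)

/-- Real powers `a ^ t` defined by the continuous functional calculus. -/
noncomputable def cpow {A : Type*} [CStarAlgebra A] (a : A) (t : ℝ) : A :=
  cfc (fun x : ℝ => x ^ t) a

/-- The logarithm defined by the continuous functional calculus. -/
noncomputable def clog {A : Type*} [CStarAlgebra A] (a : A) : A :=
  cfc Real.log a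

/-- The metric `d(x, y) = ‖log (x^{-1/2} y x^{-1/2})‖` on positive invertible elements. -/
noncomputable def dd {A : Type*} [CStarAlgebra A] (x y : A) : ℝ :=
  ‖clog (cpow x (-(1/2)) * y * cpow x (-(1/2)))‖

/-- The geodesic `γ_{a,b}(t) = a^{1/2} (a^{-1/2} b a^{-1/2})^t a^{1/2}`. -/
noncomputable def geo {A : Type*} [CStarAlgebra A] (a b : A) (t : ℝ) : A :=
  cpow a (1/2) * cpow (cpow a (-(1/2)) * b * cpow a (-(1/2))) t * cpow a (1/2)

/-- The distance from a point to a subset. -/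
noncomputable def distSet {A : Type*} [CStarAlgebra A] (x : A) (C : Set A) : ℝ :=
  sInf {r : ℝ | ∃ c ∈ C, r = dd x c}

/-- The distance between two subsets. -/
noncomputable def distSets {A : Type*} [CStarAlgebra A] (C D : Set A) : ℝ :=
  sInf {r : ℝ | ∃ x ∈ C, ∃ y ∈ D, r = dd x y}

/-- The orbit `O_H(1) = {h h* : h ∈ H}` of the identity under the action `h · a = h a h*`. -/
def orbitOne {A : Type*} [CStarAlgebra A] (H : Subgroup Aˣ) : Set A :=
  {x : A | ∃ h ∈ H, x = (h : A) * star (h : A)}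

/-- The fixed point set `P^H = {a positive invertible : h a h* = a for all h ∈ H}`. -/
def fixedSet {A : Type*} [CStarAlgebra A] (H : Subgroup Aˣ) : Set A :=
  {a : A | IsPosInv a ∧ ∀ h ∈ H, (h : A) * a * star (h : A) = a}

/-- The similarity number `Sim(H) = inf {‖s‖ ‖s⁻¹‖ : s a unitarizer of H}`. -/
noncomputable def simNum {A : Type*} [CStarAlgebra A] (H : Subgroup Aˣ) : ℝ :=
  sInf {c : ℝ | ∃ s : Aˣ, (∀ h ∈ H, (↑s⁻¹ : A) * (h : A) * (s : A) ∈ unitary A) ∧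
    c = ‖(s : A)‖ * ‖(↑s⁻¹ : A)‖}

/-- The set of norms of elements of `H`; its supremum is the size `|H|`. -/
def normSet {A : Type*} [CStarAlgebra A] (H : Subgroup Aˣ) : Set ℝ :=
  {r : ℝ | ∃ h ∈ H, r = ‖(h : A)‖}

/-- The orbit diameter function `D_H(a) = sup_{h ∈ H} d(a, h a h*)`. -/
noncomputable def orbDiam {A : Type*} [CStarAlgebra A] (H : Subgroup Aˣ) (a : A) : ℝ :=
  sSup {r : ℝ | ∃ h ∈ H, r = dd a ((h : A) * a * star (h : A))}

/-- The size `|p H q| = sup_{h ∈ H} ‖p h q‖` of the conjugated family `p H q`. -/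
noncomputable def sizeConj {A : Type*} [CStarAlgebra A] (H : Subgroup Aˣ) (p q : A) : ℝ :=
  sSup {c : ℝ | ∃ h ∈ H, c = ‖p * (h : A) * q‖}

/-- The similarity number `Sim(p H q)` of the conjugated family `p H q`. -/
noncomputable def simConj {A : Type*} [CStarAlgebra A] (H : Subgroup Aˣ) (p q : A) : ℝ :=
  sInf {c : ℝ | ∃ u : Aˣ, (∀ h ∈ H, (↑u⁻¹ : A) * (p * (h : A) * q) * (u : A) ∈ unitary A) ∧
    c = ‖(u : A)‖ * ‖(↑u⁻¹ : A)‖}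

/-- The geodesic `γ_{r², s²}(t) = r (r⁻¹ s² r⁻¹)^t r` for positive invertible `r`, `s`. -/
noncomputable def gammaRS {A : Type*} [CStarAlgebra A] (r s : Aˣ) (t : ℝ) : A :=
  (r : A) * cpow ((↑r⁻¹ : A) * ((s : A) * (s : A)) * (↑r⁻¹ : A)) t * (r : A)

section aux
variable {A : Type*} [CStarAlgebra A] [PartialOrder A] [StarOrderedRing A]

lemma posInv_iff {a : A} : IsPosInv a ↔ IsStrictlyPositive a :=
  (CStarAlgebra.isStrictlyPositive_iff_isSelfAdjoint_and_spectrum_pos (A := A)).symm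

lemma cpow_eq {a : A} (ha : IsStrictlyPositive a) (t : ℝ) : cpow a t = a ^ t := by
  rw [cpow, CFC.rpow_eq_cfc_real (ha := ha.nonneg)]

lemma sp_conj {a : A} (ha : IsStrictlyPositive a) (x : Aˣ) :
    IsStrictlyPositive ((x : A) * a * star (x : A)) :=
  ⟨star_right_conjugate_nonneg ha.nonneg _, (x.isUnit.mul ha.isUnit).mul x.isUnit.star⟩

/-- the square root as a unit -/
noncomputable def sqU {a : A} (ha : IsStrictlyPositive a) : Aˣ where
  val := a ^ (1/2 : ℝ)
  inv := a ^ (-(1/2) : ℝ)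
  val_inv := CFC.rpow_mul_rpow_neg _ ha
  inv_val := CFC.rpow_neg_mul_rpow _ ha

lemma star_rpow (a : A) (t : ℝ) : star (a ^ t) = a ^ t :=
  (IsSelfAdjoint.of_nonneg CFC.rpow_nonneg).star_eq

lemma sqU_mul {a : A} (ha : IsStrictlyPositive a) :
    (sqU ha : A) * star (sqU ha : A) = a := by
  change a ^ (1/2 : ℝ) * star (a ^ (1/2 : ℝ)) = a
  rw [star_rpow, ← CFC.rpow_add ha.isUnit]
  norm_num
  exact CFC.rpow_one a ha.nonneg

/-- geodesic from `x x*` -/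
noncomputable def GG (x : Aˣ) (b : A) (t : ℝ) : A :=
  (x : A) * ((↑x⁻¹ : A) * b * star (↑x⁻¹ : A)) ^ t * star (x : A)

lemma geo_eq {a b : A} (ha : IsStrictlyPositive a) (hb : IsStrictlyPositive b) (t : ℝ) :
    geo a b t = GG (sqU ha) b t := by
  have h := sp_conj hb (sqU ha)⁻¹
  have e : (↑(sqU ha)⁻¹ : A) = a ^ (-(1/2) : ℝ) := rfl
  have e2 : (↑(sqU ha) : A) = a ^ ((1/2) : ℝ) := rfl
  rw [e, star_rpow] at h
  rw [geo, GG, cpow_eq ha, cpow_eq ha, cpow_eq h, e, e2, star_rpow, star_rpow]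

lemma rpow_unitary {c : A} (hc : IsStrictlyPositive c) (u : unitary A) (t : ℝ) :
    ((u : A) * c * star (u : A)) ^ t = (u : A) * c ^ t * star (u : A) := by
  have h : IsStrictlyPositive ((u : A) * c * star (u : A)) :=
    sp_conj hc (Unitary.toUnits u)
  rw [← cpow_eq h, ← cpow_eq hc, cpow, cpow]
  have := StarAlgHomClass.map_cfc (R := ℝ) (S := ℝ) (Unitary.conjStarAlgAut ℝ A u)
    (fun x : ℝ => x ^ t) c
    (by
      intro x hx
      have : 0 < x := (posInv_iff.2 hc).2 hx
      exact (Real.continuousAt_rpow_const x t (Or.inl this.ne')).continuousWithinAt)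
    (by
      change Continuous fun x : A => (u : A) * x * star (u : A)
      fun_prop)
    (IsSelfAdjoint.of_nonneg hc.nonneg) (by
      simpa using IsSelfAdjoint.of_nonneg h.nonneg)
  simpa using this.symm

lemma GG_congr {x y : Aˣ} (hxy : (x : A) * star (x : A) = (y : A) * star (y : A))
    {b : A} (hb : IsStrictlyPositive b) (t : ℝ) : GG x b t = GG y b t := by
  let u : A := ↑(y⁻¹ * x)
  have huu : u * star u = 1 := by
    have : u * star u = (↑y⁻¹ : A) * ((x : A) * star (x : A)) * star (↑y⁻¹ : A) := by
      simp [u, mul_assoc]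
    rw [this, hxy]
    rw [← mul_assoc, Units.inv_mul, one_mul, ← star_mul, Units.inv_mul, star_one]
  have hs : star u = ↑(x⁻¹ * y) := by
    have : (↑(x⁻¹ * y) : A) * u = 1 := by simp [u, mul_assoc]
    calc star u = (↑(x⁻¹ * y) * u) * star u := by rw [this, one_mul]
      _ = _ := by rw [mul_assoc, huu, mul_one]
  have huu' : star u * u = 1 := by rw [hs]; simp [u, mul_assoc]
  let U : unitary A := ⟨u, Unitary.mem_iff.2 ⟨huu', huu⟩⟩
  have hyx : (y : A) * u = x := by simp [u]
  have hinv : (↑y⁻¹ : A) = u * ↑x⁻¹ := by simp [u]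
  have key := rpow_unitary (sp_conj hb x⁻¹) U t
  have hU : (U : A) = u := rfl
  rw [hU] at key
  have e1 : (↑y⁻¹ : A) * b * star (↑y⁻¹ : A)
    = u * (↑x⁻¹ * b * star (↑x⁻¹ : A)) * star u := by
    rw [hinv, star_mul]; simp only [mul_assoc]
  rw [GG, GG, e1, key, ← hyx, star_mul]
  simp only [mul_assoc]

lemma GG_eq_geo {x : Aˣ} {a b : A} (ha : IsStrictlyPositive a) (hb : IsStrictlyPositive b)
    (hx : (x : A) * star (x : A) = a) (t : ℝ) : GG x b t = geo a b t := by
  rw [geo_eq ha hb]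
  exact GG_congr (by rw [hx, sqU_mul]) hb t

lemma geo_equiv {a b : A} (ha : IsStrictlyPositive a) (hb : IsStrictlyPositive b) (h : Aˣ)
    (t : ℝ) : (h : A) * geo a b t * star (h : A) =
      geo ((h : A) * a * star (h : A)) ((h : A) * b * star (h : A)) t := by
  rw [← GG_eq_geo (x := h * sqU ha) (sp_conj ha h) (sp_conj hb h), geo_eq ha hb, GG, GG]
  · have : (↑(h * sqU ha)⁻¹ : A) * ((h : A) * b * star (h : A)) * star (↑(h * sqU ha)⁻¹ : A)
      = ↑(sqU ha)⁻¹ * b * star (↑(sqU ha)⁻¹ : A) := by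
      have e : star (h : A) * star (↑h⁻¹ : A) = 1 := by
        rw [← star_mul, Units.inv_mul, star_one]
      have e' : ∀ z : A, star (h : A) * (star (↑h⁻¹ : A) * z) = z := fun z => by
        rw [← mul_assoc, e, one_mul]
      simp only [mul_inv_rev, Units.val_mul, star_mul, mul_assoc, e', Units.inv_mul_cancel_left]
    rw [this]
    simp [mul_assoc]
  · rw [Units.val_mul, star_mul, mul_assoc, ← mul_assoc (sqU ha : A), sqU_mul, mul_assoc]

lemma geo_symm {a b : A} (ha : IsStrictlyPositive a) (hb : IsStrictlyPositive b)
    (t : ℝ) : geo a b t = geo b a (1 - t) := by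
  set c : A := (↑(sqU ha)⁻¹ : A) * b * star (↑(sqU ha)⁻¹ : A) with hcdef
  have hc : IsStrictlyPositive c := sp_conj hb _
  have e0 : (sqU ha : A) * c * star (sqU ha : A) = b := by
    simp only [hcdef, mul_assoc, Units.mul_inv_cancel_left]
    rw [← star_mul, Units.mul_inv, star_one, mul_one]
  have hx : (↑(sqU ha * sqU hc) : A) * star (↑(sqU ha * sqU hc) : A) = b := by
    rw [Units.val_mul, star_mul, mul_assoc, ← mul_assoc (sqU hc : A), sqU_mul, ← mul_assoc, e0]
  rw [← GG_eq_geo hb ha hx, geo_eq ha hb, GG, GG, ← hcdef]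
  have e1 : (↑(sqU ha * sqU hc)⁻¹ : A) * a * star (↑(sqU ha * sqU hc)⁻¹ : A) = c ^ (-1 : ℝ) := by
    have e2 : (↑(sqU ha)⁻¹ : A) * a * star (↑(sqU ha)⁻¹ : A) = 1 := by
      conv_lhs => enter [1, 2]; rw [← sqU_mul ha]
      rw [Units.inv_mul_cancel_left, ← star_mul, Units.inv_mul, star_one]
    calc _ = (↑(sqU hc)⁻¹ : A) * ((↑(sqU ha)⁻¹ : A) * a * star (↑(sqU ha)⁻¹ : A))
          * star (↑(sqU hc)⁻¹ : A) := by
            simp only [mul_inv_rev, Units.val_mul, star_mul, mul_assoc]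
      _ = c ^ (-(1/2) : ℝ) * star (c ^ (-(1/2) : ℝ)) := by rw [e2, mul_one]; rfl
      _ = _ := by rw [star_rpow, ← CFC.rpow_add hc.isUnit]; norm_num
  have e3 : (c ^ (-1 : ℝ)) ^ (1 - t) = c ^ (t - 1) := by
    rw [CFC.rpow_rpow c (-1) (1 - t) (by norm_num) hc]
    congr 1; ring
  rw [e1, e3, Units.val_mul, star_mul]
  have e4 : (sqU hc : A) * c ^ (t - 1) * star (sqU hc : A) = c ^ t := by
    change c ^ (1/2 : ℝ) * c ^ (t - 1) * star (c ^ (1/2 : ℝ)) = _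
    rw [star_rpow, ← CFC.rpow_add hc.isUnit, ← CFC.rpow_add hc.isUnit]
    congr 1; ring
  rw [← e4]
  simp only [mul_assoc]

lemma sp_smul {a : A} (ha : IsStrictlyPositive a) {k : ℝ} (hk : 0 < k) :
    IsStrictlyPositive (k • a) :=
  ⟨smul_nonneg hk.le ha.nonneg, ha.isUnit.smul (Units.mk0 k hk.ne')⟩

lemma rpow_smul' {a : A} (ha : IsStrictlyPositive a) {k : ℝ} (hk : 0 < k) (t : ℝ) :
    (k • a) ^ t = k ^ t • a ^ t := by
  have hcont : ∀ s : Set ℝ, s ⊆ Set.Ioi 0 → ContinuousOn (fun x : ℝ => x ^ t) s := by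
    intro s hs x hx
    exact (Real.continuousAt_rpow_const x t (Or.inl (hs hx).ne')).continuousWithinAt
  have hspec := (posInv_iff.2 ha).2
  have hsa : IsSelfAdjoint a := .of_nonneg ha.nonneg
  have hc2 : ContinuousOn (fun x : ℝ => x ^ t) (Set.image (fun x : ℝ => k • x) (spectrum ℝ a)) := by
    apply hcont
    rintro _ ⟨x, hx, rfl⟩
    exact mul_pos hk (hspec hx)
  rw [← cpow_eq ha, ← cpow_eq (sp_smul ha hk), cpow, cpow,
    ← cfc_comp_smul k (fun x : ℝ => x ^ t) a hc2 hsa,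
    ← cfc_smul (k ^ t) (fun x : ℝ => x ^ t) a (hcont _ hspec)]
  refine cfc_congr fun x hx => ?_
  simp only [smul_eq_mul]
  exact Real.mul_rpow hk.le (hspec hx).le

lemma geo_mono_right {a b b' : A} (ha : IsStrictlyPositive a) (hb : IsStrictlyPositive b)
    (hb' : IsStrictlyPositive b') {k : ℝ} (hk : 0 < k) (h : b ≤ k • b') {t : ℝ}
    (ht : t ∈ Set.Icc (0 : ℝ) 1) : geo a b t ≤ k ^ t • geo a b' t := by
  rw [geo_eq ha hb, geo_eq ha hb', GG, GG, ← smul_mul_assoc, ← mul_smul_comm,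
    ← rpow_smul' (sp_conj hb' _) hk]
  apply star_right_conjugate_le_conjugate
  apply CFC.rpow_le_rpow ht
  have := star_right_conjugate_le_conjugate h (↑(sqU ha)⁻¹ : A)
  simpa using this

lemma geo_mono {a a' b b' : A} (ha : IsStrictlyPositive a) (hb : IsStrictlyPositive b)
    (ha' : IsStrictlyPositive a') (hb' : IsStrictlyPositive b') {k l : ℝ} (hk : 0 < k)
    (hl : 0 < l) (h : a ≤ k • a') (h' : b ≤ l • b') {t : ℝ}
    (ht : t ∈ Set.Icc (0 : ℝ) 1) : geo a b t ≤ (k ^ (1 - t) * l ^ t) • geo a' b' t := by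
  have ht' : 1 - t ∈ Set.Icc (0 : ℝ) 1 := ⟨by linarith [ht.2], by linarith [ht.1]⟩
  calc geo a b t ≤ l ^ t • geo a b' t := geo_mono_right ha hb hb' hl h' ht
    _ = l ^ t • geo b' a (1 - t) := by rw [geo_symm ha hb']
    _ ≤ l ^ t • (k ^ (1 - t) • geo b' a' (1 - t)) :=
      smul_le_smul_of_nonneg_left (geo_mono_right hb' ha ha' hk h ht') (by positivity)
    _ = _ := by rw [geo_symm ha' hb', smul_smul, mul_comm]

lemma geo_sp {a b : A} (ha : IsStrictlyPositive a) (hb : IsStrictlyPositive b) (t : ℝ) :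
    IsStrictlyPositive (geo a b t) := by
  rw [geo_eq ha hb]
  exact sp_conj (IsStrictlyPositive.rpow _ t (sp_conj hb _)) _

lemma conj_le_iff (x : Aˣ) (a b : A) :
    (x : A) * a * star (x : A) ≤ (x : A) * b * star (x : A) ↔ a ≤ b := by
  rw [← sub_nonneg, ← sub_mul, ← mul_sub, x.isUnit.star_right_conjugate_nonneg_iff, sub_nonneg]

lemma dd_le_iff {x y : A} (hx : IsStrictlyPositive x) (hy : IsStrictlyPositive y) {r : ℝ}
    (hr : 0 ≤ r) : dd x y ≤ r ↔ x ≤ Real.exp r • y ∧ y ≤ Real.exp r • x := by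
  have hz := sp_conj hy (sqU hx)⁻¹
  have e : (↑(sqU hx)⁻¹ : A) = x ^ (-(1/2) : ℝ) := rfl
  have hdd : dd x y = ‖cfc Real.log ((↑(sqU hx)⁻¹ : A) * y * star (↑(sqU hx)⁻¹ : A))‖ := by
    rw [dd, clog, cpow_eq hx, e, star_rpow]
  have e1 : (↑(sqU hx)⁻¹ : A) * x * star (↑(sqU hx)⁻¹ : A) = 1 := by
    conv_lhs => enter [1, 2]; rw [← sqU_mul hx]
    rw [Units.inv_mul_cancel_left, ← star_mul, Units.inv_mul, star_one]
  rw [← conj_le_iff (sqU hx)⁻¹ x, ← conj_le_iff (sqU hx)⁻¹ y, hdd, mul_smul_comm, mul_smul_comm,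
    smul_mul_assoc, smul_mul_assoc, e1]
  set z : A := (↑(sqU hx)⁻¹ : A) * y * star (↑(sqU hx)⁻¹ : A)
  have hsa : IsSelfAdjoint z := .of_nonneg hz.nonneg
  have hspec := (posInv_iff.2 hz).2
  have f1 : 1 ≤ Real.exp r • z ↔ algebraMap ℝ A (Real.exp (-r)) ≤ z := by
    rw [Algebra.algebraMap_eq_smul_one]
    constructor
    · intro h
      have := smul_le_smul_of_nonneg_left h (Real.exp_pos (-r)).le
      rwa [smul_smul, ← Real.exp_add, neg_add_cancel, Real.exp_zero, one_smul] at this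
    · intro h
      have := smul_le_smul_of_nonneg_left h (Real.exp_pos r).le
      rwa [smul_smul, ← Real.exp_add, add_neg_cancel, Real.exp_zero, one_smul] at this
  rw [f1, ← Algebra.algebraMap_eq_smul_one, algebraMap_le_iff_le_spectrum hsa,
    le_algebraMap_iff_spectrum_le hsa, norm_cfc_le_iff _ _ hr
      (Real.continuousOn_log.mono fun w hw => (hspec hw).ne') hsa]
  rw [← forall₂_and]
  refine forall₂_congr fun w hw => ?_
  have hw0 : 0 < w := hspec hw
  rw [Real.norm_eq_abs, abs_le, Real.le_log_iff_exp_le hw0, Real.log_le_iff_le_exp hw0]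

lemma dd_geo {a b : A} (ha : IsStrictlyPositive a) (hb : IsStrictlyPositive b) (h : Aˣ)
    {t : ℝ} (ht : t ∈ Set.Icc (0 : ℝ) 1) :
    dd (geo a b t) ((h : A) * geo a b t * star (h : A)) ≤
      (1 - t) * dd a ((h : A) * a * star (h : A)) + t * dd b ((h : A) * b * star (h : A)) := by
  have ha' := sp_conj ha h
  have hb' := sp_conj hb h
  obtain ⟨h1, h2⟩ := (dd_le_iff ha ha' (norm_nonneg _)).1 le_rfl
  obtain ⟨h3, h4⟩ := (dd_le_iff hb hb' (norm_nonneg _)).1 le_rfl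
  have hd1 : 0 ≤ dd a ((h : A) * a * star (h : A)) := norm_nonneg _
  have hd2 : 0 ≤ dd b ((h : A) * b * star (h : A)) := norm_nonneg _
  rw [dd_le_iff (geo_sp ha hb t) (sp_conj (geo_sp ha hb t) h)
    (add_nonneg (mul_nonneg (by linarith [ht.2]) hd1) (mul_nonneg ht.1 hd2)), geo_equiv ha hb]
  have e : Real.exp ((1 - t) * dd a ((h : A) * a * star (h : A))
      + t * dd b ((h : A) * b * star (h : A))) =
      Real.exp (dd a ((h : A) * a * star (h : A))) ^ (1 - t) *
      Real.exp (dd b ((h : A) * b * star (h : A))) ^ t := by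
    rw [Real.exp_add, ← Real.exp_mul, ← Real.exp_mul, mul_comm t, mul_comm (1 - t)]
  rw [e]
  exact ⟨geo_mono ha hb ha' hb' (Real.exp_pos _) (Real.exp_pos _) h1 h3 ht,
    geo_mono ha' hb' ha hb (Real.exp_pos _) (Real.exp_pos _) h2 h4 ht⟩

lemma bdd_orb (H : Subgroup Aˣ) (hbdd : BddAbove (normSet H)) {a : A}
    (ha : IsStrictlyPositive a) :
    BddAbove {r : ℝ | ∃ h ∈ H, r = dd a ((h : A) * a * star (h : A))} := by
  obtain ⟨M, hM⟩ := hbdd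
  have hsa : IsSelfAdjoint a := .of_nonneg ha.nonneg
  obtain ⟨m, hm, hma⟩ : ∃ m : ℝ, 0 < m ∧ algebraMap ℝ A m ≤ a := by
    rcases subsingleton_or_nontrivial A with hA | hA
    · exact ⟨1, one_pos, (Subsingleton.elim _ _).le⟩
    · obtain ⟨m, hm, hma⟩ := (CFC.exists_pos_algebraMap_le_iff hsa).2
        (fun x hx => (posInv_iff.2 ha).2 hx)
      exact ⟨m, hm, hma⟩
  have key : ∀ h ∈ H, (h : A) * a * star (h : A) ≤ (‖a‖ * M ^ 2 / m) • a := by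
    intro h hh
    have hn : ‖(h : A)‖ ≤ M := hM ⟨h, hh, rfl⟩
    have one_nn : (0 : A) ≤ 1 := zero_le_one
    calc (h : A) * a * star (h : A) ≤ ‖a‖ • ((h : A) * star (h : A)) :=
          CStarAlgebra.star_right_conjugate_le_norm_smul hsa
      _ ≤ ‖a‖ • algebraMap ℝ A (‖(h : A)‖ ^ 2) :=
          smul_le_smul_of_nonneg_left CStarAlgebra.mul_star_le_algebraMap_norm_sq (norm_nonneg _)
      _ = (‖a‖ * ‖(h : A)‖ ^ 2) • (1 : A) := by
          rw [Algebra.algebraMap_eq_smul_one, smul_smul]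
      _ ≤ (‖a‖ * M ^ 2) • (1 : A) := smul_le_smul_of_nonneg_right (by gcongr) one_nn
      _ = (‖a‖ * M ^ 2 / m) • algebraMap ℝ A m := by
          rw [Algebra.algebraMap_eq_smul_one, smul_smul, div_mul_cancel₀ _ hm.ne']
      _ ≤ _ := smul_le_smul_of_nonneg_left hma (by positivity)
  set C := ‖a‖ * M ^ 2 / m
  have hC : C ≤ Real.exp |C| := (le_abs_self C).trans (by linarith [Real.add_one_le_exp |C|])
  refine ⟨|C|, ?_⟩
  rintro _ ⟨h, hh, rfl⟩
  have ha' := sp_conj ha h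
  rw [dd_le_iff ha ha' (abs_nonneg _)]
  constructor
  · refine le_trans ?_ (smul_le_smul_of_nonneg_right hC ha'.nonneg)
    have := star_right_conjugate_le_conjugate (key h⁻¹ (H.inv_mem hh)) (h : A)
    have e : (h : A) * (↑h⁻¹ * a * star (↑h⁻¹ : A)) * star (h : A) = a := by
      simp only [mul_assoc, Units.mul_inv_cancel_left]
      rw [← star_mul, Units.mul_inv, star_one, mul_one]
    rw [e] at this
    simpa using this
  · exact (key h hh).trans (smul_le_smul_of_nonneg_right hC ha.nonneg)

end aux

/-- The orbit diameter function `D_H` is geodesically convex. -/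
theorem stmt9 {A : Type*} [CStarAlgebra A] (H : Subgroup Aˣ)
    (hbdd : BddAbove (normSet H)) (a b : A) (ha : IsPosInv a) (hb : IsPosInv b)
    (t : ℝ) (ht : t ∈ Set.Icc (0 : ℝ) 1) :
    orbDiam H (geo a b t) ≤ (1 - t) * orbDiam H a + t * orbDiam H b := by
  let _ : PartialOrder A := CStarAlgebra.spectralOrder A
  have _ : StarOrderedRing A := CStarAlgebra.spectralOrderedRing A
  have ha := posInv_iff.1 ha
  have hb := posInv_iff.1 hb
  refine csSup_le ⟨_, 1, H.one_mem, rfl⟩ ?_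
  rintro _ ⟨h, hh, rfl⟩
  refine (dd_geo ha hb h ht).trans (add_le_add ?_ ?_)
  · exact mul_le_mul_of_nonneg_left (le_csSup (bdd_orb H hbdd ha) ⟨h, hh, rfl⟩)
      (by linarith [ht.2])
  · exact mul_le_mul_of_nonneg_left (le_csSup (bdd_orb H hbdd hb) ⟨h, hh, rfl⟩) ht.1
end

section
/- Let A be a unital complex C*-algebra, H a uniformly bounded subgroup of Aˣ, and r, s positive invertible elements of A. For t ∈ [0,1] let γ_t = γ_{r²,s²}(t) = r(r⁻¹ s² r⁻¹)^t r and let H_t = γ_t^{-1/2} H γ_t^{1/2}. Then |H_t| ≤ |r⁻¹ H r|^{1−t} · |s⁻¹ H s|^{t}, where |K| = sup_{k∈K} ‖k‖ denotes the size of a uniformly bounded subgroup K ≤ Aˣ. -/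
open NormedSpace in
lemma aux_expadd {A : Type*} [CStarAlgebra A] (L : A) (z w : ℂ) :
    exp ((z + w) • L) = exp (z • L) * exp (w • L) := by
  let +nondep : NormedAlgebra ℚ A := .restrictScalars ℚ ℂ A
  rw [add_smul]
  exact exp_add_of_commute (((Commute.refl L).smul_left z).smul_right w)

open NormedSpace in
lemma aux_expinv {A : Type*} [CStarAlgebra A] (L : A) (z : ℂ) :
    exp (z • L) * exp ((-z) • L) = 1 := by
  rw [← aux_expadd]; simp

open NormedSpace in
lemma aux_expinv2 {A : Type*} [CStarAlgebra A] (L : A) (z : ℂ) :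
    exp ((-z) • L) * exp (z • L) = 1 := by
  rw [← aux_expadd]; simp

open NormedSpace in
lemma aux_starexp {A : Type*} [CStarAlgebra A] (L : A) (hL : IsSelfAdjoint L) (t : ℝ) :
    star (exp ((t : ℂ) • L)) = exp ((t : ℂ) • L) := by
  rw [star_exp, star_smul, hL.star_eq]; simp

open NormedSpace in
lemma aux_unit {A : Type*} [CStarAlgebra A] (L : A) (hL : IsSelfAdjoint L) (t : ℝ) :
    exp (((t : ℂ) * Complex.I) • L) ∈ unitary A := by
  have h : star (exp (((t : ℂ) * Complex.I) • L)) = exp ((-((t : ℂ) * Complex.I)) • L) := by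
    rw [star_exp, star_smul, hL.star_eq]; simp
  rw [Unitary.mem_iff, h]
  exact ⟨aux_expinv2 _ _, aux_expinv _ _⟩

open NormedSpace in
lemma aux_strip {A : Type*} [CStarAlgebra A] (L x : A) (hL : IsSelfAdjoint L) (z : ℂ) :
    ‖exp ((-z) • L) * x * exp (z • L)‖ =
      ‖exp ((-(z.re : ℂ)) • L) * x * exp ((z.re : ℂ) • L)‖ := by
  have h1 : exp ((-z) • L) = exp ((((-z.im : ℝ) : ℂ) * Complex.I) • L) * exp ((-(z.re : ℂ)) • L) := by
    rw [← aux_expadd]; congr 2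
    conv_lhs => rw [← Complex.re_add_im z]
    push_cast; ring
  have h2 : exp (z • L) = exp ((z.re : ℂ) • L) * exp (((z.im : ℂ) * Complex.I) • L) := by
    rw [← aux_expadd, Complex.re_add_im]
  rw [h1, h2, ← mul_assoc, CStarRing.norm_mul_mem_unitary _ (aux_unit L hL _), mul_assoc, mul_assoc,
    CStarRing.norm_mem_unitary_mul _ (aux_unit L hL _), mul_assoc]

open NormedSpace in
lemma aux_diff {A : Type*} [CStarAlgebra A] (L x : A) :
    Differentiable ℂ (fun z : ℂ => exp ((-z) • L) * x * exp (z • L)) := by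
  have h : Differentiable ℂ (fun z : ℂ => exp (z • L)) :=
    fun z => (hasDerivAt_exp_smul_const L z).differentiableAt
  have h' : Differentiable ℂ (fun z : ℂ => exp ((-z) • L)) :=
    h.comp differentiable_neg
  exact (h'.mul_const x).mul h

open NormedSpace in
lemma aux_three {A : Type*} [CStarAlgebra A] (L x : A) (hL : IsSelfAdjoint L) (t : ℝ)
    (ht : t ∈ Set.Icc (0 : ℝ) 1) :
    ‖exp ((-(t : ℂ)) • L) * x * exp ((t : ℂ) • L)‖ ≤
      ‖x‖ ^ (1 - t) * ‖exp ((-1 : ℂ) • L) * x * exp ((1 : ℂ) • L)‖ ^ t := by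
  have key := Complex.HadamardThreeLines.norm_le_interp_of_mem_verticalClosedStrip₀₁'
    (fun z : ℂ => exp ((-z) • L) * x * exp (z • L)) (z := (t : ℂ))
    (a := ‖x‖) (b := ‖exp ((-1 : ℂ) • L) * x * exp ((1 : ℂ) • L)‖)
    (by simpa [Complex.HadamardThreeLines.verticalClosedStrip] using ht)
    (aux_diff L x).diffContOnCl
    (by
      have hc : Continuous (fun u : ℝ => ‖exp ((-(u : ℂ)) • L) * x * exp ((u : ℂ) • L)‖) :=
        ((aux_diff L x).continuous.comp Complex.continuous_ofReal).norm
      obtain ⟨C, hC⟩ := (isCompact_Icc (a := (0 : ℝ)) (b := 1)).bddAbove_image hc.continuousOn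
      refine ⟨C, ?_⟩
      rintro _ ⟨z, hz, rfl⟩
      simp only [Function.comp]
      rw [aux_strip L x hL]
      exact hC ⟨z.re, hz, rfl⟩)
    (by
      intro z hz
      have hz' : z.re = 0 := hz
      rw [aux_strip L x hL, hz']; simp)
    (by
      intro z hz
      have hz' : z.re = 1 := hz
      rw [aux_strip L x hL, hz']; simp)
  simpa using key

lemma aux_posinv {A : Type*} [CStarAlgebra A] (g : Aˣ) : IsPosInv ((g : A) * star (g : A)) := by
  refine ⟨IsSelfAdjoint.mul_star_self _, fun x hx => ?_⟩
  have h0 : (0 : ℝ) ≤ x := by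
    have := spectrum_star_mul_self_nonneg (b := star (g : A))
    rw [star_star] at this
    exact this x hx
  have hne : x ≠ 0 := by
    rintro rfl
    have hu : IsUnit ((g : A) * star (g : A)) := g.isUnit.mul g.isUnit.star
    exact (spectrum.zero_notMem_iff ℝ).2 hu hx
  exact lt_of_le_of_ne h0 hne.symm

lemma aux_clog {A : Type*} [CStarAlgebra A] (a : A) : IsSelfAdjoint (clog a) :=
  cfc_predicate _ a

lemma aux_cpow {A : Type*} [CStarAlgebra A] {a : A} (ha : IsPosInv a) (t : ℝ) :
    cpow a t = NormedSpace.exp ((t : ℂ) • clog a) := by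
  have hc : ContinuousOn Real.log (spectrum ℝ a) :=
    Real.continuousOn_log.mono fun x hx => (ha.2 hx).ne'
  have h1 : (t : ℂ) • clog a = cfc (fun x => t * Real.log x) a := by
    rw [cfc_const_mul t Real.log a hc, clog, Complex.coe_smul]
  rw [h1, ← CFC.real_exp_eq_normedSpace_exp (cfc_predicate _ a),
    ← cfc_comp' Real.exp (fun x => t * Real.log x) a (by fun_prop) (by fun_prop) ha.1, cpow]
  refine cfc_congr fun x hx => ?_
  rw [Real.rpow_def_of_pos (ha.2 hx), mul_comm]

lemma aux_cpow_one {A : Type*} [CStarAlgebra A] {a : A} (ha : IsPosInv a) : cpow a 1 = a := by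
  simp only [cpow, Real.rpow_one]
  exact cfc_id' ℝ a ha.1

lemma aux_conj {A : Type*} [CStarAlgebra A] (g k : Aˣ) (h : A)
    (hgk : (g : A) * star (g : A) = (k : A) * star (k : A)) :
    ‖(↑k⁻¹ : A) * h * (k : A)‖ = ‖(↑g⁻¹ : A) * h * (g : A)‖ := by
  have hu1 : ((k⁻¹ * g : Aˣ) : A) * star ((k⁻¹ * g : Aˣ) : A) = 1 := by
    rw [Units.val_mul, star_mul, mul_assoc, ← mul_assoc (g : A), hgk, mul_assoc (k : A),
      ← star_mul, Units.inv_mul, star_one, mul_one, Units.inv_mul]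
  have hs : star ((k⁻¹ * g : Aˣ) : A) = ((k⁻¹ * g)⁻¹ : Aˣ) :=
    (Units.inv_eq_of_mul_eq_one_right hu1).symm
  have hu : ((k⁻¹ * g : Aˣ) : A) ∈ unitary A := by
    rw [Unitary.mem_iff, hs]; exact ⟨Units.inv_mul _, Units.mul_inv _⟩
  have hu' : (((k⁻¹ * g)⁻¹ : Aˣ) : A) ∈ unitary A := hs ▸ Unitary.star_mem hu
  have e : (↑k⁻¹ : A) * h * (k : A) =
      ((k⁻¹ * g : Aˣ) : A) * ((↑g⁻¹ : A) * h * (g : A)) * (((k⁻¹ * g)⁻¹ : Aˣ) : A) := by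
    simp [mul_assoc]
  rw [e, CStarRing.norm_mul_mem_unitary _ hu', CStarRing.norm_mem_unitary_mul _ hu]

lemma aux_point {A : Type*} [CStarAlgebra A] (r s : Aˣ)
    (hr : IsPosInv (r : A)) (hs : IsPosInv (s : A))
    (t : ℝ) (ht : t ∈ Set.Icc (0 : ℝ) 1) (h : A) :
    ‖cpow (gammaRS r s t) (-(1/2)) * h * cpow (gammaRS r s t) (1/2)‖ ≤
      ‖(↑r⁻¹ : A) * h * (r : A)‖ ^ (1 - t) * ‖(↑s⁻¹ : A) * h * (s : A)‖ ^ t := by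
  have hr1 : star (r : A) = r := hr.1
  have hs1 : star (s : A) = s := hs.1
  have hr2 : star (↑r⁻¹ : A) = ↑r⁻¹ := by
    rw [← Units.coe_star_inv]; congr 2; ext; simpa using hr1
  set b : A := (↑r⁻¹ : A) * ((s : A) * (s : A)) * (↑r⁻¹ : A) with hbdef
  have hb : IsPosInv b := by
    have := aux_posinv (r⁻¹ * s)
    rw [Units.val_mul, star_mul, hs1, hr2] at this
    rw [hbdef]
    simpa [mul_assoc] using this
  set L : A := ((1 / 2 : ℝ) : ℂ) • clog b with hLdef
  have hL : IsSelfAdjoint L := by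
    rw [IsSelfAdjoint, hLdef, star_smul, (aux_clog b).star_eq]; simp
  -- the square root of `b ^ u`
  let E : ℝ → Aˣ := fun u => ⟨NormedSpace.exp ((u : ℂ) • L), NormedSpace.exp ((-(u : ℂ)) • L),
    aux_expinv L _, aux_expinv2 L _⟩
  have hE : ∀ u : ℝ, ((r * E u : Aˣ) : A) * star ((r * E u : Aˣ) : A) = r * cpow b u * r := by
    intro u
    have : (E u : A) * star (E u : A) = cpow b u := by
      change NormedSpace.exp ((u : ℂ) • L) * star (NormedSpace.exp ((u : ℂ) • L)) = _
      rw [aux_starexp L hL, ← aux_expadd, aux_cpow hb, hLdef, smul_smul]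
      congr 2; push_cast; ring
    rw [Units.val_mul, star_mul, hr1, ← this]
    simp only [mul_assoc]
  have hN : ∀ u : ℝ, ‖(↑(r * E u)⁻¹ : A) * h * ((r * E u : Aˣ) : A)‖ =
      ‖NormedSpace.exp ((-(u : ℂ)) • L) * ((↑r⁻¹ : A) * h * (r : A)) *
        NormedSpace.exp ((u : ℂ) • L)‖ := by
    intro u
    rw [mul_inv_rev, Units.val_mul, Units.val_mul]
    change ‖NormedSpace.exp ((-(u : ℂ)) • L) * (↑r⁻¹ : A) * h * ((r : A) *
      NormedSpace.exp ((u : ℂ) • L))‖ = _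
    simp only [mul_assoc]
  have hγ : IsPosInv (gammaRS r s t) := by
    have := aux_posinv (r * E t)
    rwa [hE t] at this
  -- endpoint `t = 1`
  have hone : ‖(↑s⁻¹ : A) * h * (s : A)‖ = ‖NormedSpace.exp ((-1 : ℂ) • L) *
      ((↑r⁻¹ : A) * h * (r : A)) * NormedSpace.exp ((1 : ℂ) • L)‖ := by
    have h1 := aux_conj (r * E 1) s h (by
      rw [hE 1, aux_cpow_one hb, hs1, hbdef]
      simp [mul_assoc])
    rw [h1, hN 1]; simp
  let G : Aˣ := ⟨cpow (gammaRS r s t) (1/2), cpow (gammaRS r s t) (-(1/2)), by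
      rw [aux_cpow hγ, aux_cpow hγ, Complex.ofReal_neg]; exact aux_expinv _ _, by
      rw [aux_cpow hγ, aux_cpow hγ, Complex.ofReal_neg]; exact aux_expinv2 _ _⟩
  have hmid := aux_conj (r * E t) G h (by
    rw [hE t]
    change gammaRS r s t = cpow (gammaRS r s t) (1/2) * star (cpow (gammaRS r s t) (1/2))
    conv_lhs => rw [← aux_cpow_one hγ]
    rw [aux_cpow hγ, aux_cpow hγ, aux_starexp _ (aux_clog _), ← aux_expadd]
    congr 2; push_cast; ring)
  change ‖(↑G⁻¹ : A) * h * (G : A)‖ ≤ _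
  rw [hmid, hN t, hone]
  exact aux_three L _ hL t ht

lemma aux_bdd {A : Type*} [CStarAlgebra A] (H : Subgroup Aˣ)
    (hbdd : BddAbove (normSet H)) (p q : A) :
    BddAbove {c : ℝ | ∃ h ∈ H, c = ‖p * (h : A) * q‖} := by
  obtain ⟨C, hC⟩ := hbdd
  refine ⟨‖p‖ * C * ‖q‖, ?_⟩
  rintro _ ⟨h, hh, rfl⟩
  have h1 : ‖(h : A)‖ ≤ C := hC ⟨h, hh, rfl⟩
  calc ‖p * (h : A) * q‖ ≤ ‖p * (h : A)‖ * ‖q‖ := norm_mul_le _ _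
    _ ≤ ‖p‖ * ‖(h : A)‖ * ‖q‖ := by gcongr; exact norm_mul_le _ _
    _ ≤ ‖p‖ * C * ‖q‖ := by gcongr

/-- Geometric interpolation for the size: `|H_t| ≤ |r⁻¹ H r|^{1-t} |s⁻¹ H s|^t`,
where `H_t = γ_t^{-1/2} H γ_t^{1/2}` along the geodesic `γ_t = γ_{r², s²}(t)`. -/
theorem stmt12 {A : Type*} [CStarAlgebra A] (H : Subgroup Aˣ)
    (hbdd : BddAbove (normSet H)) (r s : Aˣ)
    (hr : IsPosInv (r : A)) (hs : IsPosInv (s : A))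
    (t : ℝ) (ht : t ∈ Set.Icc (0 : ℝ) 1) :
    sizeConj H (cpow (gammaRS r s t) (-(1/2))) (cpow (gammaRS r s t) (1/2)) ≤
      sizeConj H (↑r⁻¹ : A) (r : A) ^ (1 - t) * sizeConj H (↑s⁻¹ : A) (s : A) ^ t := by
  refine csSup_le ⟨_, 1, H.one_mem, rfl⟩ ?_
  rintro _ ⟨h, hh, rfl⟩
  have h1 : ‖(↑r⁻¹ : A) * (h : A) * (r : A)‖ ≤ sizeConj H (↑r⁻¹ : A) (r : A) :=
    le_csSup (aux_bdd H hbdd _ _) ⟨h, hh, rfl⟩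
  have h2 : ‖(↑s⁻¹ : A) * (h : A) * (s : A)‖ ≤ sizeConj H (↑s⁻¹ : A) (s : A) :=
    le_csSup (aux_bdd H hbdd _ _) ⟨h, hh, rfl⟩
  refine (aux_point r s hr hs t ht h).trans ?_
  have h3 : 0 ≤ 1 - t := by linarith [ht.2]
  have h4 : 0 ≤ t := ht.1
  have h5 := (norm_nonneg _).trans h1
  exact mul_le_mul (Real.rpow_le_rpow (norm_nonneg _) h1 h3)
    (Real.rpow_le_rpow (norm_nonneg _) h2 h4) (Real.rpow_nonneg (norm_nonneg _) _)
    (Real.rpow_nonneg h5 _)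
end
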